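/- For every n ≥ 4, every binary sum whose value equals the product ∏_{i=4}^{n} (tower(i−1) + 1) has at least 2^{n−3} terms; that is, if ∏_{i=4}^{n} (tower(i−1) + 1) = ∑_{j=1}^m εⱼ·2^{pⱼ} with εⱼ ∈ {−1, 1} and pⱼ ∈ ℕ (repetitions allowed), then m ≥ 2^{n−3}. -/

import Mathlib

/-- A binary sum, as a list of (coefficient, exponent) pairs; its value. -/
def binVal (l : List (ℤ × ℕ)) : ℤ := (l.map fun p => p.1 * 2 ^ p.2).sum

/-- All coefficients belong to `{-1, 1}`. -/
def GoodCoeffs (l : List (ℤ × ℕ)) : Prop := ∀ p ∈ l, p.1 = 1 ∨ p.1 = -1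

/-- The tower function: `tower 1 = 2` and `tower (j+1) = 2 ^ tower j`
(so `tower j` is a tower of `j` twos). -/
def tower : ℕ → ℕ
  | 0 => 1
  | j + 1 => 2 ^ tower j

/-- The weight of the non-adjacent form of an integer. -/
def nafW (N : ℤ) : ℤ :=
  if N = 0 then 0
  else if N % 2 = 0 then nafW (N / 2)
  else if N % 4 = 1 then nafW ((N - 1) / 4) + 1
  else nafW ((N + 1) / 4) + 1
termination_by N.natAbs
decreasing_by all_goals omega

theorem nafW_zero : nafW 0 = 0 := by
  rw [nafW]; simp

theorem nafW_even (N M : ℤ) (h : N = 2 * M) : nafW N = nafW M := by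
  subst h
  by_cases h0 : M = 0
  · subst h0; rfl
  · rw [nafW, if_neg (by omega), if_pos (by omega)]
    congr 1; omega

theorem nafW_one (N M : ℤ) (h : N = 4 * M + 1) : nafW N = nafW M + 1 := by
  subst h
  rw [nafW, if_neg (by omega), if_neg (by omega), if_pos (by omega)]
  congr 2; omega

theorem nafW_three (N M : ℤ) (h : N = 4 * M - 1) : nafW N = nafW M + 1 := by
  subst h
  rw [nafW, if_neg (by omega), if_neg (by omega), if_neg (by omega)]
  congr 2; omega

theorem nafW_succ : ∀ (n : ℕ) (N : ℤ), N.natAbs = n → |nafW (N + 1) - nafW N| ≤ 1 := by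
  intro n
  induction n using Nat.strong_induction_on with
  | _ n ih =>
  intro N hN
  obtain ⟨M, hM⟩ : ∃ M : ℤ, N = 4 * M ∨ N = 8 * M + 1 ∨ N = 8 * M + 2 ∨ N = 4 * M + 3 ∨
      N = 8 * M + 5 ∨ N = 8 * M + 6 := by
    by_cases h : N % 4 = 0 ∨ N % 4 = 3
    · exact ⟨N / 4, by omega⟩
    · exact ⟨N / 8, by omega⟩
  rcases hM with h | h | h | h | h | h
  · rw [nafW_one (N + 1) M (by omega), nafW_even N (2 * M) (by omega), nafW_even (2 * M) M rfl]
    simp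
  · rw [nafW_even (N + 1) (4 * M + 1) (by omega), nafW_one (4 * M + 1) M rfl,
      nafW_one N (2 * M) (by omega), nafW_even (2 * M) M rfl]
    simp
  · have := ih _ (by omega) (2 * M) rfl
    rw [nafW_three (N + 1) (2 * M + 1) (by omega), nafW_even N (4 * M + 1) (by omega),
      nafW_one (4 * M + 1) M rfl]
    rw [nafW_even (2 * M) M rfl] at this
    simpa using this
  · rw [nafW_even (N + 1) (2 * (M + 1)) (by omega), nafW_even (2 * (M + 1)) (M + 1) rfl,
      nafW_three N (M + 1) (by omega)]
    simp
  · have := ih _ (by omega) (2 * M + 1) rfl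
    rw [nafW_even (N + 1) (4 * M + 3) (by omega), nafW_three (4 * M + 3) (M + 1) (by omega),
      nafW_one N (2 * M + 1) (by omega)]
    rw [nafW_even (2 * M + 1 + 1) (M + 1) (by omega)] at this
    simpa using this
  · rw [nafW_three (N + 1) (2 * M + 2) (by omega), nafW_even (2 * M + 2) (M + 1) (by omega),
      nafW_even N (4 * M + 3) (by omega), nafW_three (4 * M + 3) (M + 1) (by omega)]
    simp

theorem nafW_pow : ∀ (k : ℕ) (N : ℤ), |nafW (N + 2 ^ k) - nafW N| ≤ 1 := by
  intro k
  induction k using Nat.strong_induction_on with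
  | _ k ih =>
  intro N
  rcases k with _ | k
  · simpa using nafW_succ _ N rfl
  have hk : (2 : ℤ) ^ (k + 1) = 2 * 2 ^ k := by ring
  rcases Int.even_or_odd' N with ⟨M, h | h⟩
  · rw [nafW_even N M h, nafW_even (N + 2 ^ (k + 1)) (M + 2 ^ k) (by omega)]
    exact ih k (by omega) M
  rcases Int.even_or_odd' M with ⟨L, h' | h'⟩
  · rcases k with _ | k
    · rw [nafW_one N L (by omega), nafW_three (N + 2 ^ (0 + 1)) (L + 1) (by omega)]
      simpa using nafW_succ _ L rfl
    · have hk : (2 : ℤ) ^ (k + 1 + 1) = 4 * 2 ^ k := by ring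
      rw [nafW_one N L (by omega), nafW_one (N + 2 ^ (k + 1 + 1)) (L + 2 ^ k) (by omega)]
      simpa using ih k (by omega) L
  · rcases k with _ | k
    · rw [nafW_three N (L + 1) (by omega), nafW_one (N + 2 ^ (0 + 1)) (L + 1) (by omega)]
      simp
    · have hk : (2 : ℤ) ^ (k + 1 + 1) = 4 * 2 ^ k := by ring
      rw [nafW_three N (L + 1) (by omega),
        nafW_three (N + 2 ^ (k + 1 + 1)) (L + 1 + 2 ^ k) (by omega)]
      simpa using ih k (by omega) (L + 1)

theorem nafW_le (l : List (ℤ × ℕ)) (hl : GoodCoeffs l) : nafW (binVal l) ≤ l.length := by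
  induction l with
  | nil => simp [binVal, nafW_zero]
  | cons p l ih =>
    have ih := ih (fun q hq => hl q (List.mem_cons_of_mem _ hq))
    have hv : binVal (p :: l) = p.1 * 2 ^ p.2 + binVal l := by simp [binVal]
    rw [hv]
    push_cast [List.length_cons]
    rcases hl p List.mem_cons_self with h | h
    · have := nafW_pow p.2 (binVal l)
      rw [abs_le] at this
      rw [h, one_mul, add_comm]
      linarith
    · have := nafW_pow p.2 (p.1 * 2 ^ p.2 + binVal l)
      rw [abs_le] at this
      rw [show p.1 * 2 ^ p.2 + binVal l + 2 ^ p.2 = binVal l by rw [h]; ring] at this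
      linarith

theorem nafW_add : ∀ (t : ℕ) (A B : ℤ), 3 * (A.natAbs : ℤ) < 2 ^ t →
    nafW (A + 2 ^ t * B) = nafW A + nafW B := by
  intro t
  induction t using Nat.strong_induction_on with
  | _ t ih =>
  intro A B hA
  rcases t with _ | t
  · have : A = 0 := by
      rw [pow_zero] at hA
      omega
    subst this
    simp [nafW_zero]
  have hk : (2 : ℤ) ^ (t + 1) = 2 * 2 ^ t := by ring
  have hm : (2 : ℤ) ^ (t + 1) * B = 2 * (2 ^ t * B) := by ring
  rcases Int.even_or_odd' A with ⟨M, h | h⟩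
  · rw [nafW_even A M h, nafW_even (A + 2 ^ (t + 1) * B) (M + 2 ^ t * B) (by omega)]
    exact ih t (by omega) M B (by omega)
  rcases t with _ | t
  · rw [zero_add, pow_one] at hA
    omega
  have hk : (2 : ℤ) ^ (t + 1 + 1) = 4 * 2 ^ t := by ring
  have hm : (2 : ℤ) ^ (t + 1 + 1) * B = 4 * (2 ^ t * B) := by ring
  have h3 : ¬ (3 : ℤ) ∣ 2 ^ t := fun hd => by
    have := Int.prime_three.dvd_of_dvd_pow hd
    omega
  rcases Int.even_or_odd' M with ⟨L, h' | h'⟩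
  · rw [nafW_one A L (by omega), nafW_one (A + 2 ^ (t + 1 + 1) * B) (L + 2 ^ t * B) (by omega),
      ih t (by omega) L B (by omega)]
    ring
  · rw [nafW_three A (L + 1) (by omega),
      nafW_three (A + 2 ^ (t + 1 + 1) * B) (L + 1 + 2 ^ t * B) (by omega),
      ih t (by omega) (L + 1) B (by omega)]
    ring

theorem sq_bound (x : ℕ) (hx : 5 ≤ x) : x * (x + 1) ≤ 2 ^ x := by
  induction x, hx using Nat.le_induction with
  | base => norm_num
  | succ n hn ih => rw [pow_succ]; nlinarith

theorem tower_ge (k : ℕ) : 16 ≤ tower (k + 3) := by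
  induction k with
  | zero => simp [tower]
  | succ k ih =>
    have : tower (k + 1 + 3) = 2 ^ tower (k + 3) := rfl
    have := (Nat.lt_two_pow_self : tower (k + 3) < 2 ^ tower (k + 3))
    omega

theorem prod_main (k : ℕ) :
    0 < (∏ i ∈ Finset.Icc 4 (k + 3), ((tower (i - 1) : ℤ) + 1)) ∧
    3 * (∏ i ∈ Finset.Icc 4 (k + 3), ((tower (i - 1) : ℤ) + 1)) < tower (k + 3) ∧
    nafW (∏ i ∈ Finset.Icc 4 (k + 3), ((tower (i - 1) : ℤ) + 1)) = 2 ^ k := by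
  induction k with
  | zero =>
    have h1 : nafW 1 = 1 := by rw [nafW_one 1 0 (by norm_num), nafW_zero]; norm_num
    simp [tower, h1]
  | succ k ih =>
    have hp : (∏ i ∈ Finset.Icc 4 (k + 1 + 3), ((tower (i - 1) : ℤ) + 1)) =
        (∏ i ∈ Finset.Icc 4 (k + 3), ((tower (i - 1) : ℤ) + 1)) * ((tower (k + 3) : ℤ) + 1) := by
      rw [show k + 1 + 3 = (k + 3) + 1 by ring, Finset.prod_Icc_succ_top (by omega)]
      rfl
    rw [hp]
    generalize (∏ i ∈ Finset.Icc 4 (k + 3), ((tower (i - 1) : ℤ) + 1)) = P at ih ⊢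
    obtain ⟨h0, h1, h2⟩ := ih
    have hx := tower_ge k
    have ht : tower (k + 1 + 3) = 2 ^ tower (k + 3) := rfl
    have hb := sq_bound (tower (k + 3)) (by omega)
    rw [← ht] at hb
    have hb' : (tower (k + 3) : ℤ) * (tower (k + 3) + 1) ≤ tower (k + 1 + 3) := by exact_mod_cast hb
    have hs : (tower (k + 3) : ℤ) = 2 ^ tower (k + 2) := by
      rw [show tower (k + 3) = 2 ^ tower (k + 2) from rfl]; push_cast; rfl
    refine ⟨by positivity, by nlinarith, ?_⟩
    rw [show P * ((tower (k + 3) : ℤ) + 1) = P + 2 ^ tower (k + 2) * P by rw [hs]; ring,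
      nafW_add _ _ _ (by rw [← hs]; omega), h2]
    ring

/-- For every `n ≥ 4`, every binary sum whose value equals
`∏_{i=4}^{n} (tower (i-1) + 1)` has at least `2^(n-3)` terms. -/
theorem product_of_towers_needs_many_terms (n : ℕ) (hn : 4 ≤ n)
    (l : List (ℤ × ℕ)) (hl : GoodCoeffs l)
    (hval : binVal l = ∏ i ∈ Finset.Icc 4 n, ((tower (i - 1) : ℤ) + 1)) :
    2 ^ (n - 3) ≤ l.length := by
  obtain ⟨k, rfl⟩ : ∃ k, n = k + 3 := ⟨n - 3, by omega⟩
  have h := nafW_le l hl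
  rw [hval, (prod_main k).2.2] at h
  rw [Nat.add_sub_cancel]
  exact_mod_cast h
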